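/- Let F ⊆ 𝖱^n be closed and unbounded (i.e., F is not contained in [0,z]^n for any z ∈ 𝖱). Then there exist a nonempty subset I ⊆ N = {1,…,n} and c ∈ 𝖱^{N∖I} such that Δ_I(c) ∩ F is closed and unbounded in Δ_I(c). -/

import Mathlib

noncomputable section
open Set

/-- The first uncountable ordinal `ω₁`. -/
def Omega1 : Ordinal := Ordinal.omega 1

/-- The closed long ray `𝖱`: `ω₁ × [0,1)` with the lexicographic order. -/
def LongRay : Type 1 := {o : Ordinal // o < Omega1} ×ₗ (Set.Ico (0:ℝ) 1)

instance : LinearOrder LongRay :=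
  inferInstanceAs (LinearOrder ({o : Ordinal // o < Omega1} ×ₗ (Set.Ico (0:ℝ) 1)))

/-- `𝖱` carries the order topology. -/
instance : TopologicalSpace LongRay := Preorder.topology LongRay
instance : OrderTopology LongRay := ⟨rfl⟩

lemma omega1_pos : (0 : Ordinal) < Omega1 := Ordinal.omega_pos 1

/-- The point `0 = (0,0)` of the long ray. -/
def rayZero : LongRay := toLex (⟨0, omega1_pos⟩, ⟨0, by simp⟩)

/-- Identification of the countable ordinal `o` with the point `(o,0)` of the long ray
(junk value for `o ≥ ω₁`). -/
def ordR (o : Ordinal) : LongRay :=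
  if h : o < Omega1 then toLex (⟨o, h⟩, ⟨0, by simp⟩) else rayZero

/-- The `I`-diagonal at height `c` (only the values of `c` off `I` are relevant). -/
def Delta (n : ℕ) (I : Finset (Fin n)) (c : Fin n → LongRay) : Set (Fin n → LongRay) :=
  {x | (∀ i ∈ I, ∀ i' ∈ I, x i = x i') ∧ ∀ j ∉ I, x j = c j}

/-- `f` is `I`-cofinal if `f` restricted to `Δ_I = Δ_I(0)` is unbounded. -/
def ICofinal (n : ℕ) (f : (Fin n → LongRay) → LongRay) (I : Finset (Fin n)) : Prop :=
  ¬ BddAbove (f '' Delta n I (fun _ => rayZero))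

/-- The cofinality class `𝔠(f) = {I : f is I-cofinal}`. -/
def cofClass (n : ℕ) (f : (Fin n → LongRay) → LongRay) : Set (Finset (Fin n)) :=
  {I | ICofinal n f I}

/-- `M_I(c) = {x : x_i ≥ c for all i ∈ I}`. -/
def MSet (n : ℕ) (I : Finset (Fin n)) (c : LongRay) : Set (Fin n → LongRay) :=
  {x | ∀ i ∈ I, c ≤ x i}

/-- `E_I(b,d) = {x ∈ M_I(d) : x_j = b_j for all j ∉ I}`. -/
def ESet (n : ℕ) (I : Finset (Fin n)) (b : Fin n → LongRay) (d : LongRay) :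
    Set (Fin n → LongRay) :=
  {x | (∀ i ∈ I, d ≤ x i) ∧ ∀ j ∉ I, x j = b j}

/-!
Take an ultrafilter on `F` that tends to infinity in some coordinate. In every coordinate it
tends to infinity or, bounded intervals being compact, converges; let `I` be the set of coordinates
of the first kind and `c` the limit in the others. As `𝖱` is first countable, one can choose a
sequence in `F`, far out along the ultrafilter, whose coordinates outside `I` converge to `c` and
whose coordinates in `I` are interleaved with an increasing sequence starting at a given point.
Countable subsets of `𝖱` are bounded, so this sequence has a limit `s`, to which all coordinates in
`I` converge. Since `F` is closed, it contains the point of `Δ_I(c)` whose `I`-coordinates are `s`.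
-/

open Filter Function Topology

section Diagonals

variable {X ι α : Type*}

theorem exists_ultrafilter_tendsto_atTop [LinearOrder X] [Nonempty X] [Finite ι] {F : Set α}
    {g : ι → α → X} (hF : ¬ ∃ z, ∀ x ∈ F, ∀ i, g i x ≤ z) :
    ∃ U : Ultrafilter α, F ∈ U ∧ ∃ i, Tendsto (g i) U atTop := by
  obtain ⟨i, hi⟩ : ∃ i, ∃ᶠ x in comap (g i) atTop, x ∈ F := by
    by_contra! h
    simp only [eventually_comap] at h
    obtain ⟨z, hz⟩ := (eventually_all.2 h).exists_forall_of_atTop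
    exact hF ⟨z, fun x hx i => le_of_not_ge fun hzx => hz _ hzx i x rfl hx⟩
  have : NeBot (comap (g i) atTop ⊓ 𝓟 F) := frequently_mem_iff_neBot.1 hi
  obtain ⟨U, hU⟩ := Ultrafilter.exists_le (comap (g i) atTop ⊓ 𝓟 F)
  exact ⟨U, le_principal_iff.1 (hU.trans inf_le_right), i,
    tendsto_comap.mono_left (hU.trans inf_le_left)⟩

theorem ultrafilter_le_atTop_or_exists_le_nhds [LinearOrder X] [OrderBot X] [TopologicalSpace X]
    [CompactIccSpace X] (U : Ultrafilter X) :
    (U : Filter X) ≤ atTop ∨ ∃ c, (U : Filter X) ≤ 𝓝 c := by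
  refine or_iff_not_imp_left.2 fun hU => ?_
  obtain ⟨b, hb⟩ : ∃ b, Ici b ∉ U := by simpa [atTop] using hU
  have hIcc : Icc ⊥ b ∈ U := by
    filter_upwards [Ultrafilter.compl_mem_iff_notMem.2 hb] with x hx
    exact ⟨bot_le, le_of_not_ge hx⟩
  obtain ⟨c, -, hc⟩ := isCompact_Icc.ultrafilter_le_nhds' U hIcc
  exact ⟨c, hc⟩

theorem exists_seq_tendsto_common_limit [ConditionallyCompleteLinearOrder X] [TopologicalSpace X]
    [OrderTopology X] [Finite ι] (hbdd : ∀ s : Set X, s.Countable → BddAbove s) {L l : Filter α}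
    [NeBot L] [l.IsCountablyGenerated] (hL : L ≤ l) {g : ι → α → X}
    (hg : ∀ i, Tendsto (g i) L atTop) (z : X) :
    ∃ u : ℕ → α, Tendsto u atTop l ∧
      ∃ s ≥ z, ∀ i, Tendsto (fun k => g i (u k)) atTop (𝓝 s) := by
  obtain ⟨V, hV⟩ := l.exists_antitone_basis
  have exists_next (k : ℕ) (y : X) : ∃ x ∈ V k, ∃ y' ≥ y, ∀ i, y ≤ g i x ∧ g i x ≤ y' := by
    obtain ⟨x, hxV, hyx⟩ := (Eventually.and (hL (hV.mem k))
      (eventually_all.2 fun i => (hg i).eventually_ge_atTop y)).exists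
    obtain ⟨b, hb⟩ := (finite_range fun i => g i x).bddAbove
    exact ⟨x, hxV, max y b, le_max_left _ _, fun i =>
      ⟨hyx i, le_max_of_le_right (hb (mem_range_self i))⟩⟩
  choose point hpointV next hle_next hpoint using exists_next
  let w : ℕ → X := fun k => Nat.rec z next k
  have hw_bdd : BddAbove (range w) := hbdd _ (countable_range w)
  have hw : Tendsto w atTop (𝓝 (⨆ k, w k)) :=
    tendsto_atTop_ciSup (monotone_nat_of_le_succ fun k => hle_next k (w k)) hw_bdd
  exact ⟨fun k => point k (w k), hV.tendsto fun k => hpointV k (w k), ⨆ k, w k,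
    le_ciSup hw_bdd 0, fun i =>
    tendsto_of_tendsto_of_tendsto_of_le_of_le hw (hw.comp (tendsto_add_atTop_nat 1))
      (fun k => (hpoint k (w k) i).1) fun k => (hpoint k (w k) i).2⟩

theorem frequently_atTop_piecewise_const_mem [ConditionallyCompleteLinearOrder X] [Nonempty X]
    [TopologicalSpace X] [OrderTopology X] [FirstCountableTopology X] [Countable ι]
    (hbdd : ∀ s : Set X, s.Countable → BddAbove s) {F : Set (ι → X)} (hF : IsClosed F)
    {L : Filter (ι → X)} [NeBot L] (hFL : F ∈ L) {I : Finset ι} [∀ j, Decidable (j ∈ I)]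
    {c : ι → X} (hI : ∀ i ∈ I, Tendsto (eval i) L atTop)
    (hc : ∀ j ∉ I, Tendsto (eval j) L (𝓝 (c j))) :
    ∃ᶠ s in atTop, I.piecewise (fun _ => s) c ∈ F := by
  refine frequently_atTop.2 fun z => ?_
  have hL : L ≤ 𝓟 F ⊓ ⨅ j : {j // j ∉ I}, comap (eval j.1) (𝓝 (c j)) :=
    le_inf (le_principal_iff.2 hFL) (le_iInf fun j => (hc j j.2).le_comap)
  obtain ⟨u, hu, s, hzs, hs⟩ :=
    exists_seq_tendsto_common_limit hbdd hL (fun i : I => hI i i.2) z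
  obtain ⟨huF, huc⟩ := tendsto_inf.1 hu
  refine ⟨s, hzs, hF.mem_of_tendsto (tendsto_pi_nhds.2 fun j => ?_) (tendsto_principal.1 huF)⟩
  by_cases hj : j ∈ I
  · simpa only [Finset.piecewise_eq_of_mem _ _ _ hj] using hs ⟨j, hj⟩
  · simpa only [Finset.piecewise_eq_of_notMem _ _ _ hj, comp_def] using
      tendsto_comap_iff.1 (tendsto_iInf.1 huc ⟨j, hj⟩)

/-- The `I`-diagonal at height `c` in a power `ι → X`; for `X = 𝖱` and `ι = Fin n` it unfolds to
`Delta n I c`. -/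
def partialDiagonal (I : Finset ι) (c : ι → X) : Set (ι → X) :=
  {x | (∀ i ∈ I, ∀ i' ∈ I, x i = x i') ∧ ∀ j ∉ I, x j = c j}

theorem piecewise_const_mem_partialDiagonal (I : Finset ι) [∀ j, Decidable (j ∈ I)] (s : X)
    (c : ι → X) : I.piecewise (fun _ => s) c ∈ partialDiagonal I c :=
  ⟨fun i hi i' hi' => by simp [hi, hi'], fun j hj => by simp [hj]⟩

theorem structure_of_closed_unbounded_sets_general [ConditionallyCompleteLinearOrderBot X]
    [TopologicalSpace X] [OrderTopology X] [FirstCountableTopology X] [Finite ι]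
    (hbdd : ∀ s : Set X, s.Countable → BddAbove s) {F : Set (ι → X)} (hclosed : IsClosed F)
    (hunbd : ¬ ∃ z, ∀ x ∈ F, ∀ i, x i ≤ z) :
    ∃ I : Finset ι, I.Nonempty ∧ ∃ c : ι → X,
      IsClosed (Subtype.val ⁻¹' F : Set (partialDiagonal I c)) ∧
      ¬ ∃ z, ∀ x ∈ partialDiagonal I c ∩ F, ∀ i ∈ I, x i ≤ z := by
  classical
  obtain ⟨U, hFU, i₀, hi₀⟩ := exists_ultrafilter_tendsto_atTop (g := eval) hunbd
  let I : Finset ι :=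
    {i | Tendsto (eval i) (U : Filter (ι → X)) atTop}.toFinite.toFinset
  have mem_I {i : ι} : i ∈ I ↔ Tendsto (eval i) (U : Filter (ι → X)) atTop :=
    Finite.mem_toFinset _
  have h_converges (j : ι) : ∃ c, j ∉ I → Tendsto (eval j) (U : Filter (ι → X)) (𝓝 c) := by
    rcases ultrafilter_le_atTop_or_exists_le_nhds (U.map (eval j)) with h | ⟨c, hc⟩
    · exact ⟨⊥, fun hj => absurd (mem_I.2 h) hj⟩
    · exact ⟨c, fun _ => hc⟩
  choose c hc using h_converges
  have h_frequently := frequently_atTop_piecewise_const_mem hbdd hclosed hFU (fun _ => mem_I.1) hc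
  refine ⟨I, ⟨i₀, mem_I.2 hi₀⟩, c, hclosed.preimage continuous_subtype_val, ?_⟩
  rintro ⟨z, hz⟩
  push Not at hunbd
  obtain ⟨x, -, i, hzx⟩ := hunbd z
  obtain ⟨s, hxs, hsF⟩ := frequently_atTop.1 h_frequently (x i)
  have hsz := hz _ ⟨piecewise_const_mem_partialDiagonal I s c, hsF⟩ i₀ (mem_I.2 hi₀)
  rw [Finset.piecewise_eq_of_mem _ _ _ (mem_I.2 hi₀)] at hsz
  exact (hzx.trans_le hxs).not_ge hsz

end Diagonals

section FirstCountable

theorem biInf_eq_biInf_of_forall_exists_le {κ Y : Type*} [CompleteLattice Y] {S T : Set κ}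
    {f : κ → Y} (hST : S ⊆ T) (h : ∀ a ∈ T, ∃ d ∈ S, f d ≤ f a) :
    ⨅ a ∈ T, f a = ⨅ d ∈ S, f d :=
  le_antisymm (biInf_mono hST) (iInf₂_mono' fun a ha => by simpa using h a ha)

theorem isCountablyGenerated_nhds_of_countable_cofinal_coinitial {X : Type*} [LinearOrder X]
    [TopologicalSpace X] [OrderTopology X] {c : X} {D : Set X} (hD : D.Countable)
    (hleft : ∀ a < c, ∃ d ∈ D, a ≤ d ∧ d < c) (hright : ∀ b > c, ∃ d ∈ D, c < d ∧ d ≤ b) :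
    (𝓝 c).IsCountablyGenerated := by
  have hIoi : ⨅ a ∈ Iio c, 𝓟 (Ioi a) = ⨅ d ∈ D ∩ Iio c, 𝓟 (Ioi d) :=
    biInf_eq_biInf_of_forall_exists_le inter_subset_right fun a ha =>
      let ⟨d, hd, had, hdc⟩ := hleft a ha
      ⟨d, ⟨hd, hdc⟩, principal_mono.2 (Ioi_subset_Ioi had)⟩
  have hIio : ⨅ b ∈ Ioi c, 𝓟 (Iio b) = ⨅ d ∈ D ∩ Ioi c, 𝓟 (Iio d) :=
    biInf_eq_biInf_of_forall_exists_le inter_subset_right fun b hb =>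
      let ⟨d, hd, hcd, hdb⟩ := hright b hb
      ⟨d, ⟨hd, hcd⟩, principal_mono.2 (Iio_subset_Iio hdb)⟩
  have := (hD.mono (inter_subset_left (t := Iio c))).to_subtype
  have := (hD.mono (inter_subset_left (t := Ioi c))).to_subtype
  rw [nhds_eq_order, hIoi, hIio, iInf_subtype', iInf_subtype']
  infer_instance

end FirstCountable

section Lex

variable {α β : Type*}

theorem exists_isGLB_lex [LinearOrder α] [WellFoundedLT α] [Preorder β]
    (hβ : ∀ t : Set β, t.Nonempty → ∃ b, IsGLB t b) (s : Set (α ×ₗ β)) (hs : s.Nonempty) :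
    ∃ a, IsGLB s a := by
  obtain ⟨_, ⟨x₀, hx₀, rfl⟩, hmin⟩ :=
    (wellFounded_lt (α := α)).has_min _ (hs.image fun x => (ofLex x).1)
  set o := (ofLex x₀).1
  have ho : ∀ x ∈ s, o ≤ (ofLex x).1 := fun x hx => not_lt.1 (hmin _ (mem_image_of_mem _ hx))
  obtain ⟨b, hb⟩ := hβ {t | toLex (o, t) ∈ s} ⟨(ofLex x₀).2, hx₀⟩
  refine ⟨toLex (o, b), fun x hx => Prod.Lex.le_iff.2 ?_, fun y hy => Prod.Lex.le_iff.2 ?_⟩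
  · refine (ho x hx).lt_or_eq.imp_right fun hox => ⟨hox, hb.1 ?_⟩
    rwa [mem_ofPred_eq, show o = (ofLex x).1 from hox]
  · refine (Prod.Lex.le_iff.1 (hy hx₀)).imp_right fun ⟨hyo, _⟩ => ⟨hyo, hb.2 fun t ht => ?_⟩
    exact ((Prod.Lex.le_iff.1 (hy ht)).resolve_left hyo.not_lt).2

theorem bddAbove_of_bddAbove_image_fst_lex [Preorder α] [NoMaxOrder α] [Preorder β] [Nonempty β]
    {s : Set (α ×ₗ β)} (hs : BddAbove ((fun x => (ofLex x).1) '' s)) : BddAbove s := by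
  obtain ⟨o, ho⟩ := hs
  obtain ⟨o', ho'⟩ := exists_gt o
  inhabit β
  exact ⟨toLex (o', default), fun x hx =>
    Prod.Lex.le_iff.2 (.inl ((ho (mem_image_of_mem _ hx)).trans_lt ho'))⟩

theorem exists_countable_forall_exists_between_lex [Preorder α] [LinearOrder β]
    [TopologicalSpace β] [OrderTopology β] [TopologicalSpace.SeparableSpace β] [DenselyOrdered β]
    [NoMaxOrder β] (hα : ∀ o : α, (Iic o).Countable) (c : α ×ₗ β) :
    ∃ D : Set (α ×ₗ β), D.Countable ∧ ∀ a b, a ≤ c → a < b → ∃ d ∈ D, a < d ∧ d < b := by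
  obtain ⟨Q, hQ, hQdense⟩ := TopologicalSpace.exists_countable_dense β
  refine ⟨toLex '' (Iic (ofLex c).1 ×ˢ Q), ((hα _).prod hQ).image _, fun a b hac hab => ?_⟩
  have mem_D {q : β} (hq : q ∈ Q) : toLex ((ofLex a).1, q) ∈ toLex '' (Iic (ofLex c).1 ×ˢ Q) :=
    mem_image_of_mem _ ⟨Prod.Lex.monotone_fst a c hac, hq⟩
  rcases Prod.Lex.lt_iff.1 hab with h | ⟨h, h'⟩
  · obtain ⟨q, hq, haq⟩ := hQdense.exists_gt (ofLex a).2
    exact ⟨_, mem_D hq, Prod.Lex.lt_iff.2 (.inr ⟨rfl, haq⟩), Prod.Lex.lt_iff.2 (.inl h)⟩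
  · obtain ⟨q, hq, haq, hqb⟩ := hQdense.exists_between h'
    exact ⟨_, mem_D hq, Prod.Lex.lt_iff.2 (.inr ⟨rfl, haq⟩), Prod.Lex.lt_iff.2 (.inr ⟨h, hqb⟩)⟩

end Lex

theorem exists_isGLB_Ico {R : Type*} [ConditionallyCompleteLinearOrder R] {a b : R}
    (t : Set (Ico a b)) (ht : t.Nonempty) : ∃ x, IsGLB t x := by
  let : Inhabited (Ico a b) := ⟨ht.some⟩
  have ha : a ∈ Ico a b := left_mem_Ico.2 (ht.some.2.1.trans_lt ht.some.2.2)
  exact ⟨sInf t, isGLB_csInf ht ⟨⟨a, ha⟩, fun x _ => x.2.1⟩⟩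

open scoped Classical in
/-- The conditionally complete linear order with bottom element on a linear order whose nonempty
sets have greatest lower bounds; `sInf ∅` and the supremum of an unbounded set are `⊥`. -/
abbrev conditionallyCompleteLinearOrderBotOfExistsIsGLB {X : Type*} [LinearOrder X] [OrderBot X]
    (h : ∀ s : Set X, s.Nonempty → ∃ a, IsGLB s a) : ConditionallyCompleteLinearOrderBot X where
  __ := (inferInstance : LinearOrder X)
  __ := (inferInstance : OrderBot X)
  __ := LinearOrder.toLattice
  __ :=
    letI : InfSet X := ⟨fun s => if hs : s.Nonempty then (h s hs).choose else ⊥⟩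
    conditionallyCompleteLatticeOfLatticeOfsInf X fun s _ hs => by
      have h_sInf : sInf s = (h s hs).choose := dif_pos hs
      exact h_sInf ▸ (h s hs).choose_spec
  csSup_empty := by
    simp [sSup, bot_unique ((h univ univ_nonempty).choose_spec.1 (mem_univ ⊥))]
  csSup_of_not_bddAbove s hs := by
    rw [BddAbove] at hs
    simp [sSup, hs, bot_unique ((h univ univ_nonempty).choose_spec.1 (mem_univ ⊥))]
  csInf_of_not_bddBelow s hs := (hs (OrderBot.bddBelow s)).elim

namespace Omega1

theorem countable_Iic (o : {o : Ordinal // o < Omega1}) : (Iic o).Countable := by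
  have hIio : (Iio (Order.succ o.1)).Countable := by
    rw [← Cardinal.le_aleph0_iff_set_countable, Cardinal.mk_Iio_ordinal, Cardinal.lift_le_aleph0,
      ← Cardinal.lt_aleph_one_iff, ← Cardinal.lt_omega_iff_card_lt]
    exact (Cardinal.isSuccLimit_omega 1).succ_lt o.2
  refine (hIio.preimage Subtype.val_injective).mono fun a (ha : a ≤ o) => ?_
  exact Order.lt_succ_of_le (show a.1 ≤ o.1 from ha)

theorem bddAbove_of_countable {s : Set {o : Ordinal // o < Omega1}} (hs : s.Countable) :
    BddAbove s := by
  have := hs.to_subtype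
  exact ⟨⟨⨆ o : s, o.1.1, Ordinal.iSup_lt_omega_one fun o => o.1.2⟩, fun o ho =>
    Ordinal.le_iSup (fun o : s => o.1.1) ⟨o, ho⟩⟩

instance : NoMaxOrder {o : Ordinal // o < Omega1} :=
  ⟨fun o => ⟨⟨_, (Cardinal.isSuccLimit_omega 1).succ_lt o.2⟩, Order.lt_succ o.1⟩⟩

end Omega1

namespace LongRay

instance : OrderBot LongRay where
  bot := rayZero
  bot_le x := Prod.Lex.le_iff.2 <|
    (bot_le (a := (ofLex x).1.1)).lt_or_eq.imp_right fun h => ⟨Subtype.ext h, (ofLex x).2.2.1⟩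

/-- The conditionally complete linear order on `𝖱`; not an instance, so that the order of `𝖱` keeps
being found through its `LinearOrder` instance. -/
abbrev conditionallyCompleteLinearOrderBot : ConditionallyCompleteLinearOrderBot LongRay :=
  conditionallyCompleteLinearOrderBotOfExistsIsGLB (exists_isGLB_lex exists_isGLB_Ico)

instance : FirstCountableTopology LongRay where
  nhds_generated_countable c := by
    obtain ⟨D, hD, hbetween⟩ : ∃ D : Set LongRay, D.Countable ∧
        ∀ a b, a ≤ c → a < b → ∃ d ∈ D, a < d ∧ d < b :=
      exists_countable_forall_exists_between_lex Omega1.countable_Iic c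
    refine isCountablyGenerated_nhds_of_countable_cofinal_coinitial hD
      (fun a ha => ?_) fun b hb => ?_
    · obtain ⟨d, hd, had, hdc⟩ := hbetween a c ha.le ha
      exact ⟨d, hd, had.le, hdc⟩
    · obtain ⟨d, hd, hcd, hdb⟩ := hbetween c b le_rfl hb
      exact ⟨d, hd, hcd, hdb.le⟩

theorem bddAbove_of_countable (s : Set LongRay) (hs : s.Countable) : BddAbove s :=
  bddAbove_of_bddAbove_image_fst_lex (Omega1.bddAbove_of_countable (hs.image _))

end LongRay

/-- structure of closed unbounded sets: a closed unbounded `F ⊆ 𝖱ⁿ` meets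
some diagonal `Δ_I(c)` (`I ≠ ∅`) in a set which is closed and unbounded in `Δ_I(c)`. -/
theorem structure_of_closed_unbounded_sets (n : ℕ) (F : Set (Fin n → LongRay))
    (hclosed : IsClosed F)
    (hunbd : ¬ ∃ z : LongRay, ∀ x ∈ F, ∀ i, x i ≤ z) :
    ∃ I : Finset (Fin n), I.Nonempty ∧ ∃ c : Fin n → LongRay,
      IsClosed (Subtype.val ⁻¹' F : Set ↥(Delta n I c)) ∧
      ¬ ∃ z : LongRay, ∀ x ∈ Delta n I c ∩ F, ∀ i ∈ I, x i ≤ z :=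
  letI := LongRay.conditionallyCompleteLinearOrderBot
  structure_of_closed_unbounded_sets_general LongRay.bddAbove_of_countable hclosed hunbd
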